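/- arXiv:1809.01313 — 2 statements merged into one kernel-verified Lean document; each statement's English description precedes it below -/
import Mathlib

section
/- If f is analytic on the unit disk and belongs to the Hardy space H^p for some 0 < p < ∞, then the integral of |f(x)|^p over the real segment from -1 to 1 is at most half the integral of |f(e^{iθ})|^p over θ in [0, 2π], where f(e^{iθ}) denotes the radial limit of f. -/
open Complex MeasureTheory Real Filter

/-- The Riesz–Fejér inequality with exponent `2`, for functions holomorphic past the unit circle. -/
lemma integral_norm_sq_segment_le {R : ℝ} (hR : 1 < R) {h : ℂ → ℂ}
    (hh : DifferentiableOn ℂ h (Metric.ball 0 R)) :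
    (∫ x in (-1:ℝ)..1, ‖h (x : ℂ)‖ ^ 2) ≤
      (1 / 2) * ∫ θ in (0:ℝ)..(2 * π), ‖h (Complex.exp (θ * Complex.I))‖ ^ 2 := by
  set k : ℂ → ℂ := fun z => h z * (starRingEnd ℂ) (h ((starRingEnd ℂ) z)) with hk
  have hkd : DifferentiableOn ℂ k (Metric.ball 0 R) := by
    intro z hz
    have h1 : DifferentiableAt ℂ h z := hh.differentiableAt (Metric.isOpen_ball.mem_nhds hz)
    have h2 : DifferentiableAt ℂ h ((starRingEnd ℂ) z) :=
      hh.differentiableAt (Metric.isOpen_ball.mem_nhds (by simpa using hz))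
    have h3 : DifferentiableAt ℂ (fun z => (starRingEnd ℂ) (h ((starRingEnd ℂ) z))) z := by
      have := h2.conj_conj
      simpa [Function.comp_def] using this
    exact (h1.mul h3).differentiableWithinAt
  obtain ⟨G, hG⟩ := hkd.isExactOn_ball
  have hmem : ∀ x : ℝ, x ∈ Set.uIcc (-1:ℝ) 1 → (x : ℂ) ∈ Metric.ball (0:ℂ) R := by
    intro x hx
    rw [Set.uIcc_of_le (by norm_num)] at hx
    simpa using (abs_le.2 hx).trans_lt hR
  have hcirc : ∀ θ : ℝ, Complex.exp (θ * Complex.I) ∈ Metric.ball (0:ℂ) R := by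
    intro θ
    simpa [Complex.norm_exp_ofReal_mul_I] using hR
  have hhc : Continuous fun θ : ℝ => h (Complex.exp (θ * Complex.I)) :=
    hh.continuousOn.comp_continuous (by fun_prop) hcirc
  have hkc : Continuous fun θ : ℝ => k (Complex.exp (θ * Complex.I)) :=
    hkd.continuousOn.comp_continuous (by fun_prop) hcirc
  have e1 : ∫ x in (-1:ℝ)..1, k (x : ℂ) = G 1 - G (-1) := by
    have := intervalIntegral.integral_eq_sub_of_hasDerivAt (a := -1) (b := 1)
      (f := fun x : ℝ => G x) (f' := fun x : ℝ => k x)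
      (fun x hx => (hG x (hmem x hx)).comp_ofReal)
      (ContinuousOn.intervalIntegrable
        (hkd.continuousOn.comp (by fun_prop) (fun x hx => hmem x hx)))
    simpa using this
  have e2 : ∫ θ in (0:ℝ)..π,
      k (Complex.exp (θ * Complex.I)) * (Complex.exp (θ * Complex.I) * Complex.I)
        = G (-1) - G 1 := by
    have := intervalIntegral.integral_eq_sub_of_hasDerivAt (a := 0) (b := π)
      (f := fun x : ℝ => G (Complex.exp (x * Complex.I)))
      (f' := fun θ : ℝ =>
        k (Complex.exp (θ * Complex.I)) * (Complex.exp (θ * Complex.I) * Complex.I))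
      (fun x _ => by
        have hd : HasDerivAt (fun z : ℂ => Complex.exp (z * Complex.I))
            (Complex.exp (x * Complex.I) * Complex.I) (x : ℂ) := by
          simpa using ((hasDerivAt_id (x : ℂ)).mul_const Complex.I).cexp
        exact ((hG _ (hcirc x)).comp (x : ℂ) hd).comp_ofReal)
      ((hkc.mul (by fun_prop)).intervalIntegrable _ _)
    simpa using this
  have hreal : ((∫ x in (-1:ℝ)..1, ‖h (x : ℂ)‖ ^ 2 : ℝ) : ℂ) = ∫ x in (-1:ℝ)..1, k (x : ℂ) := by
    rw [← intervalIntegral.integral_ofReal]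
    congr 1
    ext x
    simp [hk, Complex.mul_conj, Complex.normSq_eq_norm_sq]
  set φ : ℝ → ℝ := fun θ => ‖h (Complex.exp (θ * Complex.I))‖ ^ 2 with hφ
  have hφc : Continuous φ := hhc.norm.pow 2
  have hper : Function.Periodic φ (2 * π) := by
    intro θ
    simp only [hφ]
    congr 3
    push_cast
    rw [add_mul, Complex.exp_add, Complex.exp_two_pi_mul_I, mul_one]
  have hnonneg : 0 ≤ ∫ x in (-1:ℝ)..1, ‖h (x : ℂ)‖ ^ 2 :=
    intervalIntegral.integral_nonneg (by norm_num) (fun x _ => by positivity)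
  calc (∫ x in (-1:ℝ)..1, ‖h (x : ℂ)‖ ^ 2)
      = ‖((∫ x in (-1:ℝ)..1, ‖h (x : ℂ)‖ ^ 2 : ℝ) : ℂ)‖ := by
        rw [Complex.norm_real, Real.norm_of_nonneg hnonneg]
    _ = ‖∫ θ in (0:ℝ)..π,
          k (Complex.exp (θ * Complex.I)) * (Complex.exp (θ * Complex.I) * Complex.I)‖ := by
        rw [hreal, e1, e2, norm_sub_rev]
    _ ≤ ∫ θ in (0:ℝ)..π, (1 / 2) * (φ θ + φ (-θ)) := by
        refine intervalIntegral.norm_integral_le_of_norm_le pi_pos.le (Eventually.of_forall ?_)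
          (Continuous.intervalIntegrable (by fun_prop) _ _)
        intro θ _
        have hc : (starRingEnd ℂ) (Complex.exp (θ * Complex.I))
            = Complex.exp ((-θ : ℝ) * Complex.I) := by
          rw [← Complex.exp_conj]; simp
        simp only [hk, hφ, norm_mul, Complex.norm_exp_ofReal_mul_I, Complex.norm_I, mul_one, hc,
          RCLike.norm_conj]
        nlinarith [sq_nonneg (‖h (Complex.exp (θ * Complex.I))‖
          - ‖h (Complex.exp ((-θ : ℝ) * Complex.I))‖)]
    _ = (1 / 2) * ∫ θ in (0:ℝ)..(2 * π), φ θ := by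
        rw [intervalIntegral.integral_const_mul, intervalIntegral.integral_add
          (hφc.intervalIntegrable _ _)
          (Continuous.intervalIntegrable (by fun_prop) _ _),
          intervalIntegral.integral_comp_neg, neg_zero, add_comm,
          intervalIntegral.integral_add_adjacent_intervals (hφc.intervalIntegrable _ _)
          (hφc.intervalIntegrable _ _)]
        have := hper.intervalIntegral_add_eq (-π) 0
        rw [show -π + 2 * π = π by ring, zero_add] at this
        rw [this]

/-- A zero-free holomorphic function on a disk has holomorphic real powers. -/
lemma exists_differentiableOn_norm_eq_rpow {R : ℝ} (hR : 0 < R) {g : ℂ → ℂ}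
    (hg : DifferentiableOn ℂ g (Metric.ball 0 R)) (h0 : ∀ z ∈ Metric.ball (0:ℂ) R, g z ≠ 0)
    (s : ℝ) :
    ∃ h : ℂ → ℂ, DifferentiableOn ℂ h (Metric.ball 0 R) ∧
      ∀ z ∈ Metric.ball (0:ℂ) R, ‖h z‖ = ‖g z‖ ^ s := by
  have hd : DifferentiableOn ℂ (fun z => deriv g z / g z) (Metric.ball 0 R) :=
    (hg.deriv Metric.isOpen_ball).div hg h0
  obtain ⟨L, hL0, hL⟩ := hd.isExactOn_ball.with_val_at 0 (Complex.log (g 0))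
  have hz0 : (0:ℂ) ∈ Metric.ball (0:ℂ) R := Metric.mem_ball_self hR
  have hderiv : ∀ z ∈ Metric.ball (0:ℂ) R,
      HasDerivAt (fun z => g z * Complex.exp (-L z)) 0 z := by
    intro z hz
    have h1 := (hg.differentiableAt (Metric.isOpen_ball.mem_nhds hz)).hasDerivAt
    have hgz := h0 z hz
    have h2 : deriv g z * Complex.exp (-L z)
        + g z * (Complex.exp (-L z) * -(deriv g z / g z)) = 0 := by
      field_simp
      ring
    exact h2 ▸ h1.mul (hL z hz).neg.cexp
  have hconst : ∀ z ∈ Metric.ball (0:ℂ) R, g z = Complex.exp (L z) := by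
    intro z hz
    have := Metric.isOpen_ball.is_const_of_deriv_eq_zero
      (convex_ball (0:ℂ) R).isPreconnected
      (fun w hw => (hderiv w hw).differentiableAt.differentiableWithinAt)
      (fun w hw => (hderiv w hw).deriv) hz hz0
    simp only [hL0] at this
    rw [Complex.exp_neg (Complex.log (g 0)), Complex.exp_log (h0 0 hz0),
      mul_inv_cancel₀ (h0 0 hz0), Complex.exp_neg] at this
    exact (mul_inv_eq_one₀ (Complex.exp_ne_zero _)).1 this
  refine ⟨fun z => Complex.exp (s * L z), fun z hz => ?_, fun z hz => ?_⟩
  · exact ((hL z hz).differentiableAt.const_mul _).cexp.differentiableWithinAt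
  · rw [hconst z hz, Complex.norm_exp, Complex.norm_exp, ← Real.exp_mul]
    simp [mul_comm]

/-- A nonzero holomorphic function on a disk has finitely many zeros in a smaller closed disk. -/
lemma finite_zeros_closedBall {R m : ℝ} (hm : m < R) {f : ℂ → ℂ}
    (hf : DifferentiableOn ℂ f (Metric.ball 0 R)) {w : ℂ} (hw : w ∈ Metric.ball (0:ℂ) R)
    (hfw : f w ≠ 0) : {z ∈ Metric.closedBall (0:ℂ) m | f z = 0}.Finite := by
  by_contra hinf
  obtain ⟨z, hz, hacc⟩ := Set.Infinite.exists_accPt_of_subset_isCompact hinf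
    (isCompact_closedBall (0:ℂ) m) (fun z hz => hz.1)
  have hfreq : ∃ᶠ y in nhdsWithin z {z}ᶜ, f y = 0 :=
    (accPt_iff_frequently_nhdsNE.1 hacc).mono fun y hy => hy.2
  exact hfw ((hf.analyticOnNhd Metric.isOpen_ball).eqOn_zero_of_preconnected_of_frequently_eq_zero
    (convex_ball (0:ℂ) R).isPreconnected (Metric.closedBall_subset_ball hm hz) hfreq hw)

/-- Dividing out the Blaschke factors: a holomorphic function with finitely many zeros in the
closed unit disk, none on the unit circle, is dominated in the disk by a zero-free holomorphic
function having the same modulus on the circle. -/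
lemma exists_zero_free_majorant {U : Set ℂ} (hU : IsOpen U)
    (hUb : Metric.closedBall (0:ℂ) 1 ⊆ U) (S : Finset ℂ) (hS : ∀ w ∈ S, w ∈ Metric.ball (0:ℂ) 1)
    (f : ℂ → ℂ) (hf : DifferentiableOn ℂ f U)
    (hfS : ∀ z ∈ Metric.closedBall (0:ℂ) 1, f z = 0 → z ∈ S) :
    ∃ g : ℂ → ℂ, DifferentiableOn ℂ g U ∧ (∀ z ∈ Metric.closedBall (0:ℂ) 1, g z ≠ 0) ∧
      (∀ z ∈ Metric.sphere (0:ℂ) 1, ‖g z‖ = ‖f z‖) ∧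
      ∀ z ∈ Metric.closedBall (0:ℂ) 1, ‖f z‖ ≤ ‖g z‖ := by
  induction S using Finset.induction_on generalizing f with
  | empty => exact ⟨f, hf, fun z hz h => by simpa using hfS z hz h, fun _ _ => rfl, fun _ _ => le_rfl⟩
  | insert w S hwS ih =>
    have hwb : w ∈ Metric.ball (0:ℂ) 1 := hS w (Finset.mem_insert_self _ _)
    have hwc : w ∈ Metric.closedBall (0:ℂ) 1 := Metric.ball_subset_closedBall hwb
    have hS' : ∀ w ∈ S, w ∈ Metric.ball (0:ℂ) 1 := fun v hv => hS v (Finset.mem_insert_of_mem hv)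
    by_cases hfw : f w = 0
    swap
    · refine ih hS' f hf fun z hz h => ?_
      rcases Finset.mem_insert.1 (hfS z hz h) with rfl | h'
      · exact absurd h hfw
      · exact h'
    have hfa : AnalyticAt ℂ f w := hf.analyticAt (hU.mem_nhds (hUb hwc))
    have hnz : ¬ ∀ᶠ z in nhds w, f z = 0 := by
      intro hev
      have h2 : ∀ᶠ z in nhds w, z ∈ insert w S := by
        filter_upwards [hev, Metric.isOpen_ball.mem_nhds hwb] with z hz hzb
        exact hfS z (Metric.ball_subset_closedBall hzb) hz
      exact (infinite_of_mem_nhds w h2) (insert w S).finite_toSet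
    obtain ⟨n, g0, hg0, hg0w, hfg⟩ := hfa.exists_eventuallyEq_pow_smul_nonzero_iff.2 hnz
    set f1 : ℂ → ℂ := Function.update (fun z => f z * canonicalFactor 1 w z ^ n) w
      (g0 w * (1 - (starRingEnd ℂ) w * w) ^ n) with hf1
    have hf1w : f1 w = g0 w * (1 - (starRingEnd ℂ) w * w) ^ n := Function.update_self ..
    have hf1z : ∀ z, z ≠ w → f1 z = f z * canonicalFactor 1 w z ^ n :=
      fun z hz => Function.update_of_ne hz ..
    have hf1d : DifferentiableOn ℂ f1 U := by
      intro z hz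
      apply DifferentiableAt.differentiableWithinAt
      by_cases hzw : z = w
      · subst hzw
        have hd : DifferentiableAt ℂ (fun v => g0 v * (1 - (starRingEnd ℂ) z * v) ^ n) z :=
          hg0.differentiableAt.mul (by fun_prop)
        refine hd.congr_of_eventuallyEq ?_
        filter_upwards [hfg] with v hv
        by_cases hvz : v = z
        · rw [hvz, hf1w]
        · have : v - z ≠ 0 := sub_ne_zero.2 hvz
          rw [hf1z v hvz, hv, canonicalFactor_apply, smul_eq_mul, div_pow, mul_pow]
          simp only [ofReal_one, one_pow, one_mul]
          field_simp
      · have hd : DifferentiableAt ℂ (fun v => f v * canonicalFactor 1 w v ^ n) z :=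
          (hf.differentiableAt (hU.mem_nhds hz)).mul
            ((analyticOnNhd_canonicalFactor 1 w z hzw).differentiableAt.pow n)
        refine hd.congr_of_eventuallyEq ?_
        filter_upwards [isOpen_ne.mem_nhds hzw] with v hv
        exact hf1z v hv
    have hf1w0 : f1 w ≠ 0 := by
      rw [hf1w]
      refine mul_ne_zero hg0w (pow_ne_zero _ fun h => ?_)
      have h1 : (starRingEnd ℂ) w * w = ((‖w‖ ^ 2 : ℝ) : ℂ) := by
        rw [← Complex.normSq_eq_norm_sq, Complex.normSq_eq_conj_mul_self]
      rw [h1, sub_eq_zero] at h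
      have h2 : ‖w‖ ^ 2 = 1 := by exact_mod_cast h.symm
      have h3 : ‖w‖ < 1 := by simpa using hwb
      nlinarith [norm_nonneg w]
    obtain ⟨g, hgd, hg1, hg2, hg3⟩ := ih hS' f1 hf1d fun z hz h => by
      have hzw : z ≠ w := by rintro rfl; exact hf1w0 h
      rw [hf1z z hzw] at h
      have h' := (mul_eq_zero.1 h).resolve_right
        (pow_ne_zero _ (canonicalFactor_ne_zero hwb hz hzw))
      exact (Finset.mem_insert.1 (hfS z hz h')).resolve_left hzw
    have hsphere : ∀ z ∈ Metric.sphere (0:ℂ) 1, ‖f1 z‖ = ‖f z‖ := by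
      intro z hz
      have hzw : z ≠ w := by
        rintro rfl
        simp at hz hwb
        linarith
      rw [hf1z z hzw, norm_mul, norm_pow, norm_canonicalFactor_eval_circle_eq_one hwb hz, one_pow,
        mul_one]
    refine ⟨g, hgd, hg1, fun z hz => (hg2 z hz).trans (hsphere z hz), fun z hz => ?_⟩
    refine le_trans ?_ (hg3 z hz)
    by_cases hzw : z = w
    · rw [hzw, hfw, norm_zero]
      exact norm_nonneg _
    · rw [hf1z z hzw, norm_mul, norm_pow]
      refine le_mul_of_one_le_right (norm_nonneg _) (one_le_pow₀ ?_)
      have hzn : ‖z‖ ≤ 1 := by simpa using hz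
      have hwn : ‖w‖ < 1 := by simpa using hwb
      have hpos : 0 < ‖z - w‖ := norm_pos_iff.2 (sub_ne_zero.2 hzw)
      rw [canonicalFactor_apply, norm_div]
      simp only [ofReal_one, one_pow, one_mul]
      rw [one_le_div hpos]
      refine (sq_le_sq₀ (norm_nonneg _) (norm_nonneg _)).1 ?_
      have key : ‖1 - (starRingEnd ℂ) w * z‖ ^ 2 - ‖z - w‖ ^ 2
          = (1 - ‖z‖ ^ 2) * (1 - ‖w‖ ^ 2) := by
        simp only [← Complex.normSq_eq_norm_sq, Complex.normSq_apply]
        simp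
        ring
      have : 0 ≤ (1 - ‖z‖ ^ 2) * (1 - ‖w‖ ^ 2) := by
        apply mul_nonneg <;> nlinarith [norm_nonneg z, norm_nonneg w]
      linarith

/-- The Riesz–Fejér inequality for functions holomorphic past the unit circle and zero-free
on it. -/
lemma integral_norm_rpow_segment_le {R : ℝ} (hR : 1 < R) {f : ℂ → ℂ}
    (hf : DifferentiableOn ℂ f (Metric.ball 0 R)) (h0 : ∀ z ∈ Metric.sphere (0:ℂ) 1, f z ≠ 0)
    {q : ℝ} (hq : 0 < q) :
    (∫ x in (-1:ℝ)..1, ‖f (x : ℂ)‖ ^ q) ≤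
      (1 / 2) * ∫ θ in (0:ℝ)..(2 * π), ‖f (Complex.exp (θ * Complex.I))‖ ^ q := by
  have hUb : Metric.closedBall (0:ℂ) 1 ⊆ Metric.ball 0 R := Metric.closedBall_subset_ball hR
  have h1s : (1:ℂ) ∈ Metric.sphere (0:ℂ) 1 := by simp
  have hfin := finite_zeros_closedBall hR hf
    (hUb (Metric.sphere_subset_closedBall h1s)) (h0 1 h1s)
  obtain ⟨g, hgd, hg1, hg2, hg3⟩ := exists_zero_free_majorant Metric.isOpen_ball hUb hfin.toFinset
    (fun w hw => by
      have hw' := hfin.mem_toFinset.1 hw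
      rw [← Metric.closedBall_sdiff_sphere]
      exact ⟨hw'.1, fun h => h0 w h hw'.2⟩) f hf
    (fun z hz h => hfin.mem_toFinset.2 ⟨hz, h⟩)
  have hopen : IsOpen (Metric.ball (0:ℂ) R ∩ g ⁻¹' {0}ᶜ) :=
    hgd.continuousOn.isOpen_inter_preimage Metric.isOpen_ball isOpen_compl_singleton
  obtain ⟨δ, hδ, hsub⟩ := (isCompact_closedBall (0:ℂ) 1).exists_thickening_subset_open hopen
    (fun z hz => ⟨hUb hz, hg1 z hz⟩)
  rw [thickening_closedBall hδ zero_le_one] at hsub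
  obtain ⟨h, hhd, hh⟩ := exists_differentiableOn_norm_eq_rpow (by positivity : 0 < δ + 1)
    (hgd.mono fun z hz => (hsub hz).1) (fun z hz => (hsub hz).2) (q / 2)
  have hδ1 : 1 < δ + 1 := by linarith
  have hh2 : ∀ z ∈ Metric.closedBall (0:ℂ) 1, ‖h z‖ ^ 2 = ‖g z‖ ^ q := by
    intro z hz
    rw [hh z (Metric.closedBall_subset_ball hδ1 hz), ← Real.rpow_mul_natCast (norm_nonneg _)]
    norm_num
  have hseg : ∀ x ∈ Set.Icc (-1:ℝ) 1, (x : ℂ) ∈ Metric.closedBall (0:ℂ) 1 := by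
    intro x hx
    simpa using abs_le.2 hx
  have hcont : ∀ k : ℂ → ℂ, ContinuousOn k (Metric.closedBall 0 1) →
      ContinuousOn (fun x : ℝ => k x) (Set.uIcc (-1) 1) := by
    intro k hk
    rw [Set.uIcc_of_le (by norm_num)]
    exact hk.comp (by fun_prop) hseg
  calc (∫ x in (-1:ℝ)..1, ‖f (x : ℂ)‖ ^ q)
      ≤ ∫ x in (-1:ℝ)..1, ‖h (x : ℂ)‖ ^ 2 := by
        refine intervalIntegral.integral_mono_on (by norm_num)
          (((hcont f (hf.continuousOn.mono hUb)).norm.rpow_const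
            fun _ _ => Or.inr hq.le).intervalIntegrable)
          (((hcont h (hhd.continuousOn.mono
            (Metric.closedBall_subset_ball hδ1))).norm.pow 2).intervalIntegrable) fun x hx => ?_
        rw [hh2 x (hseg x hx)]
        exact Real.rpow_le_rpow (norm_nonneg _) (hg3 x (hseg x hx)) hq.le
    _ ≤ (1 / 2) * ∫ θ in (0:ℝ)..(2 * π), ‖h (Complex.exp (θ * Complex.I))‖ ^ 2 :=
        integral_norm_sq_segment_le hδ1 hhd
    _ = (1 / 2) * ∫ θ in (0:ℝ)..(2 * π), ‖f (Complex.exp (θ * Complex.I))‖ ^ q := by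
        congr 2
        ext θ
        have hθ : Complex.exp (θ * Complex.I) ∈ Metric.sphere (0:ℂ) 1 := by
          simp [Complex.norm_exp_ofReal_mul_I]
        rw [hh2 _ (Metric.sphere_subset_closedBall hθ), hg2 _ hθ]

/-- The Riesz–Fejér inequality holds for the dilations of `f` by radii arbitrarily close to `1`. -/
lemma exists_radius_integral_norm_rpow_le {f : ℂ → ℂ}
    (hf : DifferentiableOn ℂ f (Metric.ball 0 1)) {s : ℝ} (hs : s < 1) :
    ∃ r : ℝ, s < r ∧ 0 < r ∧ r < 1 ∧ ∀ q : ℝ, 0 < q →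
      (∫ x in (-1:ℝ)..1, ‖f ((r : ℂ) * x)‖ ^ q) ≤
        (1 / 2) * ∫ θ in (0:ℝ)..(2 * π), ‖f ((r : ℂ) * Complex.exp (θ * Complex.I))‖ ^ q := by
  obtain ⟨m, hm, hm1⟩ := exists_between (max_lt hs zero_lt_one)
  by_cases hzero : ∃ w ∈ Metric.ball (0:ℂ) 1, f w ≠ 0
  · obtain ⟨w, hw, hfw⟩ := hzero
    obtain ⟨r, hr, hrS⟩ := (Set.Ioo_infinite hm).exists_notMem_finite
      ((finite_zeros_closedBall hm1 hf hw hfw).image norm)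
    have hr0 : 0 < r := (le_max_right _ _).trans_lt hr.1
    refine ⟨r, (le_max_left _ _).trans_lt hr.1, hr0, hr.2.trans hm1, fun q hq => ?_⟩
    refine integral_norm_rpow_segment_le (R := r⁻¹) (f := fun z => f (r * z))
      ((one_lt_inv₀ hr0).2 (hr.2.trans hm1)) ?_ ?_ hq
    · refine hf.comp (by fun_prop) fun z hz => ?_
      have hz' : ‖z‖ < r⁻¹ := by simpa using hz
      have := (lt_inv_mul_iff₀ hr0 (a := ‖z‖) (b := 1)).1 (by simpa using hz')
      simpa [abs_of_pos hr0] using this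
    · intro z hz h
      have hz' : ‖z‖ = 1 := by simpa using hz
      have hn : ‖(r : ℂ) * z‖ = r := by simp [hz', abs_of_pos hr0]
      exact hrS ⟨r * z, ⟨by simpa [hn, hz', abs_of_pos hr0] using hr.2.le, h⟩, hn⟩
  · push Not at hzero
    have hm0 : 0 < m := (le_max_right _ _).trans_lt hm
    refine ⟨m, (le_max_left _ _).trans_lt hm, hm0, hm1, fun q hq => ?_⟩
    have : ∫ x in (-1:ℝ)..1, ‖f ((m : ℂ) * x)‖ ^ q = 0 := by
      refine intervalIntegral.integral_zero_ae (Eventually.of_forall fun x hx => ?_)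
      rw [Set.uIoc_of_le (by norm_num)] at hx
      have hx1 : |x| ≤ 1 := abs_le.2 ⟨hx.1.le, hx.2⟩
      rw [hzero, norm_zero, Real.zero_rpow hq.ne']
      simp only [mem_ball_zero_iff, norm_mul, Complex.norm_real, Real.norm_eq_abs, abs_of_pos hm0]
      nlinarith [abs_nonneg x]
    rw [this]
    exact mul_nonneg (by norm_num) (intervalIntegral.integral_nonneg (by positivity)
      fun _ _ => by positivity)

/-- Boundedness in `L^p` and a.e. convergence pass a limit to the integrals of smaller powers. -/
lemma tendsto_lintegral_rpow_of_lintegral_rpow_le {α : Type*} [MeasurableSpace α] {μ : Measure α}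
    [IsFiniteMeasure μ] {u : ℕ → α → ENNReal} {v : α → ENNReal} (hu : ∀ n, AEMeasurable (u n) μ)
    (huv : ∀ᵐ a ∂μ, Tendsto (fun n => u n a) atTop (nhds (v a))) {p q : ℝ} (hq : 0 < q)
    (hqp : q < p) {K : ENNReal} (hK : K ≠ ⊤) (huK : ∀ n, ∫⁻ a, u n a ^ p ∂μ ≤ K) {J : ENNReal}
    (hJ : ∀ᶠ n in atTop, J ≤ ∫⁻ a, u n a ^ q ∂μ) :
    J ≤ ∫⁻ a, v a ^ q ∂μ := by
  have htrunc : ∀ t : ENNReal, t ≠ 0 → t ≠ ⊤ → ∀ a : ENNReal,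
      a ^ q ≤ min a t ^ q + t ^ (-(p - q)) * a ^ p := by
    intro t ht ht' a
    rcases le_total a t with h | h
    · rw [min_eq_left h]
      exact le_self_add
    · refine le_add_left ?_
      rcases eq_or_ne a ⊤ with rfl | ha
      · rw [ENNReal.top_rpow_of_pos (hq.trans hqp), ENNReal.mul_top]
        · exact le_top
        · exact (ENNReal.rpow_pos (pos_iff_ne_zero.2 ht) ht').ne'
      · have ha0 : a ≠ 0 := (lt_of_lt_of_le (pos_iff_ne_zero.2 ht) h).ne'
        calc a ^ q = a ^ (-(p - q)) * a ^ p := by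
              rw [← ENNReal.rpow_add _ _ ha0 ha]; congr 1; ring
          _ ≤ t ^ (-(p - q)) * a ^ p := by
              refine mul_le_mul_left ?_ _
              rw [ENNReal.rpow_neg, ENNReal.rpow_neg]
              exact ENNReal.inv_le_inv.2 (ENNReal.rpow_le_rpow h (by linarith))
  have hbound : ∀ t : ENNReal, t ≠ 0 → t ≠ ⊤ →
      J ≤ ∫⁻ a, v a ^ q ∂μ + t ^ (-(p - q)) * K := by
    intro t ht ht'
    have hlim : Tendsto (fun n => ∫⁻ a, min (u n a) t ^ q ∂μ) atTop
        (nhds (∫⁻ a, min (v a) t ^ q ∂μ)) := by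
      refine tendsto_lintegral_of_dominated_convergence' (fun _ => t ^ q)
        (fun n => ((hu n).min aemeasurable_const).pow_const q)
        (fun n => Eventually.of_forall fun a => ENNReal.rpow_le_rpow (min_le_right _ _) hq.le)
        ?_ ?_
      · rw [lintegral_const]
        exact ENNReal.mul_ne_top (ENNReal.rpow_ne_top_of_nonneg hq.le ht') (measure_ne_top _ _)
      · filter_upwards [huv] with a ha
        exact (ENNReal.continuous_rpow_const.tendsto _).comp (ha.min tendsto_const_nhds)
    refine (ge_of_tendsto (hlim.add_const (t ^ (-(p - q)) * K)) ?_).trans ?_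
    · filter_upwards [hJ] with n hn
      calc J ≤ ∫⁻ a, u n a ^ q ∂μ := hn
        _ ≤ ∫⁻ a, (min (u n a) t ^ q + t ^ (-(p - q)) * u n a ^ p) ∂μ :=
            lintegral_mono fun a => htrunc t ht ht' _
        _ = ∫⁻ a, min (u n a) t ^ q ∂μ + t ^ (-(p - q)) * ∫⁻ a, u n a ^ p ∂μ := by
            rw [lintegral_add_left' (((hu n).min aemeasurable_const).pow_const q),
              lintegral_const_mul'' _ ((hu n).pow_const p)]
        _ ≤ _ := by gcongr; exact huK n
    · gcongr
      exact min_le_left _ _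
  have h0 : Tendsto (fun t : ENNReal => t ^ (-(p - q)) * K) (nhds ⊤) (nhds 0) := by
    have h1 : Tendsto (fun t : ENNReal => t ^ (-(p - q))) (nhds ⊤) (nhds 0) := by
      have := (ENNReal.continuous_rpow_const (y := -(p - q))).tendsto ⊤
      rwa [ENNReal.top_rpow_of_neg (by linarith)] at this
    simpa using ENNReal.Tendsto.mul_const h1 (Or.inr hK)
  have h2 := (h0.comp ENNReal.tendsto_nat_nhds_top).const_add (∫⁻ a, v a ^ q ∂μ)
  rw [add_zero] at h2
  refine ge_of_tendsto h2 ?_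
  filter_upwards [eventually_gt_atTop 0] with n hn
  exact hbound n (by exact_mod_cast hn.ne') (ENNReal.natCast_ne_top n)

/-- The lower Lebesgue integral of a power of the norm of a continuous function. -/
lemma lintegral_enorm_rpow_eq_ofReal {a b : ℝ} (hab : a ≤ b) {u : ℝ → ℂ}
    (hu : ContinuousOn u (Set.Icc a b)) {q : ℝ} (hq : 0 < q) :
    ∫⁻ x in Set.Ioo a b, ‖u x‖ₑ ^ q = ENNReal.ofReal (∫ x in a..b, ‖u x‖ ^ q) := by
  have hc : ContinuousOn (fun x => ‖u x‖ ^ q) (Set.Icc a b) :=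
    hu.norm.rpow_const fun _ _ => Or.inr hq.le
  rw [intervalIntegral.integral_of_le hab, integral_Ioc_eq_integral_Ioo,
    ofReal_integral_eq_lintegral_ofReal
      ((hc.integrableOn_Icc).mono_set Set.Ioo_subset_Icc_self)
      (Eventually.of_forall fun _ => by positivity)]
  refine lintegral_congr fun x => ?_
  rw [← ofReal_norm, ENNReal.ofReal_rpow_of_nonneg (norm_nonneg _) hq.le]

theorem riesz_fejer (p : ℝ) (hp : 0 < p) (f : ℂ → ℂ) (F : ℝ → ℂ)
    (hf : AnalyticOn ℂ f (Metric.ball 0 1))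
    (hHp : ∃ C : ℝ, ∀ r : ℝ, 0 ≤ r → r < 1 →
      (∫ θ in (0:ℝ)..(2 * π), ‖f ((r : ℂ) * Complex.exp (θ * Complex.I))‖ ^ p) ≤ C)
    (hF : ∀ᵐ θ : ℝ, Tendsto (fun r : ℝ => f ((r : ℂ) * Complex.exp (θ * Complex.I)))
      (nhdsWithin 1 (Set.Iio 1)) (nhds (F θ))) :
    IntervalIntegrable (fun x : ℝ => ‖f (x : ℂ)‖ ^ p) volume (-1) 1 ∧
      (∫ x in (-1:ℝ)..1, ‖f (x : ℂ)‖ ^ p) ≤ (1 / 2) * ∫ θ in (0:ℝ)..(2 * π), ‖F θ‖ ^ p := by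
  have hfd : DifferentiableOn ℂ f (Metric.ball 0 1) := hf.differentiableOn
  obtain ⟨C, hC⟩ := hHp
  have hs : ∀ n : ℕ, 1 - 1 / ((n : ℝ) + 1) < 1 := fun n => by
    have : (0:ℝ) < 1 / ((n : ℝ) + 1) := by positivity
    linarith
  choose r hr hr0 hr1 hRF using fun n => exists_radius_integral_norm_rpow_le hfd (hs n)
  have hrlim : Tendsto r atTop (nhds 1) := by
    refine tendsto_of_tendsto_of_tendsto_of_le_of_le ?_ tendsto_const_nhds
      (fun n => (hr n).le) (fun n => (hr1 n).le)
    simpa using tendsto_one_div_add_atTop_nhds_zero_nat.const_sub (1:ℝ)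
  have hrlim' : Tendsto r atTop (nhdsWithin 1 (Set.Iio 1)) :=
    tendsto_nhdsWithin_iff.2 ⟨hrlim, Eventually.of_forall hr1⟩
  have hcircle : ∀ n, Continuous fun θ : ℝ => f ((r n : ℂ) * Complex.exp (θ * Complex.I)) :=
    fun n => hfd.continuousOn.comp_continuous (by fun_prop) fun θ => by
      simpa [Complex.norm_exp_ofReal_mul_I, abs_of_pos (hr0 n)] using hr1 n
  have hsegment : ∀ n, ContinuousOn (fun x : ℝ => f ((r n : ℂ) * x)) (Set.Icc (-1) 1) :=
    fun n => hfd.continuousOn.comp (by fun_prop) fun x hx => by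
      have hx1 : |x| ≤ 1 := abs_le.2 hx
      simp only [mem_ball_zero_iff, norm_mul, Complex.norm_real, Real.norm_eq_abs,
        abs_of_pos (hr0 n)]
      nlinarith [hr0 n, hr1 n]
  have hdiam : ContinuousOn (fun x : ℝ => f x) (Set.Ioo (-1) 1) :=
    hfd.continuousOn.comp (by fun_prop) fun x hx => by simpa using abs_lt.2 hx
  set μ : Measure ℝ := volume.restrict (Set.Ioo 0 (2 * π)) with hμ
  set ν : Measure ℝ := volume.restrict (Set.Ioo (-1) 1) with hν
  set u : ℕ → ℝ → ENNReal := fun n θ => ‖f ((r n : ℂ) * Complex.exp (θ * Complex.I))‖ₑ with hu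
  have hum : ∀ n, AEMeasurable (u n) μ := fun n => (hcircle n).enorm.aemeasurable
  have hFm : AEStronglyMeasurable F μ :=
    aestronglyMeasurable_of_tendsto_ae atTop (fun n => (hcircle n).aestronglyMeasurable)
      ((ae_restrict_of_ae hF).mono fun θ hθ => hθ.comp hrlim')
  have huF : ∀ᵐ θ ∂μ, Tendsto (fun n => u n θ) atTop (nhds ‖F θ‖ₑ) :=
    (ae_restrict_of_ae hF).mono fun θ hθ => (hθ.comp hrlim').enorm
  have huK : ∀ n, ∫⁻ θ, u n θ ^ p ∂μ ≤ ENNReal.ofReal C := fun n => by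
    rw [hμ, hu, lintegral_enorm_rpow_eq_ofReal (by positivity) (hcircle n).continuousOn hp]
    exact ENNReal.ofReal_le_ofReal (hC (r n) (hr0 n).le (hr1 n))
  have hFK : ∫⁻ θ, ‖F θ‖ₑ ^ p ∂μ ≤ ENNReal.ofReal C := by
    calc ∫⁻ θ, ‖F θ‖ₑ ^ p ∂μ = ∫⁻ θ, liminf (fun n => u n θ ^ p) atTop ∂μ := by
          refine lintegral_congr_ae (huF.mono fun θ hθ => ?_)
          exact ((ENNReal.continuous_rpow_const.tendsto _).comp hθ).liminf_eq.symm
      _ ≤ liminf (fun n => ∫⁻ θ, u n θ ^ p ∂μ) atTop :=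
          lintegral_liminf_le' fun n => (hum n).pow_const p
      _ ≤ ENNReal.ofReal C := liminf_le_of_le (by isBoundedDefault)
          fun b hb => by
            obtain ⟨n, hn⟩ := hb.exists
            exact hn.trans (huK n)
  have hRF' : ∀ n, ∀ q : ℝ, 0 < q →
      2 * ∫⁻ x, ‖f ((r n : ℂ) * (x : ℝ))‖ₑ ^ q ∂ν ≤ ∫⁻ θ, u n θ ^ q ∂μ := by
    intro n q hq
    rw [hμ, hν, hu, lintegral_enorm_rpow_eq_ofReal (by positivity) (hcircle n).continuousOn hq,
      lintegral_enorm_rpow_eq_ofReal (by norm_num) (hsegment n) hq,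
      ← ENNReal.ofReal_ofNat, ← ENNReal.ofReal_mul (by norm_num)]
    refine ENNReal.ofReal_le_ofReal ?_
    linarith [hRF n q hq]
  have hsmall : ∀ q : ℝ, 0 < q → q < p →
      ∫⁻ x, ‖f (x : ℝ)‖ₑ ^ q ∂ν ≤ (∫⁻ θ, ‖F θ‖ₑ ^ q ∂μ) / 2 := by
    intro q hq hqp
    have hfatou : ∫⁻ x, ‖f (x : ℝ)‖ₑ ^ q ∂ν ≤
        liminf (fun n => ∫⁻ x, ‖f ((r n : ℂ) * (x : ℝ))‖ₑ ^ q ∂ν) atTop := by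
      calc ∫⁻ x, ‖f (x : ℝ)‖ₑ ^ q ∂ν
          = ∫⁻ x, liminf (fun n => ‖f ((r n : ℂ) * (x : ℝ))‖ₑ ^ q) atTop ∂ν := by
            refine setLIntegral_congr_fun measurableSet_Ioo fun x hx => ?_
            have hx1 : (x : ℂ) ∈ Metric.ball (0:ℂ) 1 := by simpa using abs_lt.2 hx
            have h1 : Tendsto (fun n => (r n : ℂ) * x) atTop (nhds (x : ℂ)) := by
              simpa using ((Complex.continuous_ofReal.tendsto 1).comp hrlim).mul_const (x : ℂ)
            have h2 := ((hfd.continuousOn.continuousAt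
              (Metric.isOpen_ball.mem_nhds hx1)).tendsto.comp h1).enorm
            exact ((ENNReal.continuous_rpow_const.tendsto _).comp h2).liminf_eq.symm
        _ ≤ _ := lintegral_liminf_le' fun n =>
            (((hsegment n).mono Set.Ioo_subset_Icc_self).aestronglyMeasurable
              measurableSet_Ioo).enorm.pow_const q
    refine le_of_forall_lt_imp_le_of_dense fun J hJ => ?_
    rw [ENNReal.le_div_iff_mul_le (by simp) (by simp)]
    refine tendsto_lintegral_rpow_of_lintegral_rpow_le hum huF hq hqp ENNReal.ofReal_ne_top huK ?_
    filter_upwards [eventually_lt_of_lt_liminf (hJ.trans_le hfatou)] with n hn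
    rw [mul_comm]
    exact le_trans (by gcongr) (hRF' n q hq)
  let s : ℕ → ℝ := fun m => p * (1 - 1 / ((m : ℝ) + 2))
  have hinv : ∀ m : ℕ, 0 < 1 / ((m : ℝ) + 2) ∧ 1 / ((m : ℝ) + 2) < 1 := fun m =>
    ⟨by positivity, by rw [div_lt_one (by positivity)]; linarith [(m.cast_nonneg : (0:ℝ) ≤ m)]⟩
  have hs0 : ∀ m, 0 < s m := fun m => mul_pos hp (by linarith [hinv m])
  have hsp : ∀ m, s m < p := fun m => by nlinarith [hinv m]
  have hslim : Tendsto s atTop (nhds p) := by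
    have h1 := (tendsto_add_atTop_iff_nat (f := fun n : ℕ => 1 / ((n : ℝ) + 1)) 1).2
      tendsto_one_div_add_atTop_nhds_zero_nat
    have h2 := (h1.const_sub 1).const_mul p
    simp only [sub_zero, mul_one, Nat.cast_add, Nat.cast_one, add_assoc, one_add_one_eq_two] at h2
    exact h2
  have hpow : ∀ z : ℂ, Tendsto (fun m => ‖z‖ₑ ^ s m) atTop (nhds (‖z‖ₑ ^ p)) := by
    intro z
    have h1 := ENNReal.tendsto_ofReal ((tendsto_const_nhds (x := ‖z‖)).rpow hslim (Or.inr hp))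
    simpa only [← ENNReal.ofReal_rpow_of_nonneg (norm_nonneg z) (hs0 _).le,
      ← ENNReal.ofReal_rpow_of_nonneg (norm_nonneg z) hp.le, ofReal_norm] using h1
  have hAlim : Tendsto (fun m => (∫⁻ θ, ‖F θ‖ₑ ^ s m ∂μ) / 2) atTop
      (nhds ((∫⁻ θ, ‖F θ‖ₑ ^ p ∂μ) / 2)) := by
    refine ENNReal.Tendsto.div_const ?_ (Or.inr (by simp))
    refine tendsto_lintegral_of_dominated_convergence' (fun θ => 1 + ‖F θ‖ₑ ^ p)
      (fun m => hFm.enorm.pow_const _) (fun m => Eventually.of_forall fun θ => ?_) ?_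
      (Eventually.of_forall fun θ => hpow (F θ))
    · rcases le_total ‖F θ‖ₑ 1 with h | h
      · exact (ENNReal.rpow_le_one h (hs0 m).le).trans le_self_add
      · exact (ENNReal.rpow_le_rpow_of_exponent_le h (hsp m).le).trans le_add_self
    · rw [lintegral_add_left measurable_const]
      refine ENNReal.add_ne_top.2 ⟨?_, ne_top_of_le_ne_top ENNReal.ofReal_ne_top hFK⟩
      rw [lintegral_one]
      exact measure_ne_top _ _
  have hfm : AEStronglyMeasurable (fun x : ℝ => f x) ν :=
    hdiam.aestronglyMeasurable measurableSet_Ioo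
  have hmain : ∫⁻ x, ‖f (x : ℝ)‖ₑ ^ p ∂ν ≤ (∫⁻ θ, ‖F θ‖ₑ ^ p ∂μ) / 2 := by
    calc ∫⁻ x, ‖f (x : ℝ)‖ₑ ^ p ∂ν
        = ∫⁻ x, liminf (fun m => ‖f (x : ℝ)‖ₑ ^ s m) atTop ∂ν :=
          lintegral_congr fun x => (hpow _).liminf_eq.symm
      _ ≤ liminf (fun m => ∫⁻ x, ‖f (x : ℝ)‖ₑ ^ s m ∂ν) atTop :=
          lintegral_liminf_le' fun m => hfm.enorm.pow_const _
      _ ≤ liminf (fun m => (∫⁻ θ, ‖F θ‖ₑ ^ s m ∂μ) / 2) atTop :=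
          liminf_le_liminf (Eventually.of_forall fun m => hsmall _ (hs0 m) (hsp m))
      _ = (∫⁻ θ, ‖F θ‖ₑ ^ p ∂μ) / 2 := hAlim.liminf_eq
  have hFtop : ∫⁻ θ, ‖F θ‖ₑ ^ p ∂μ ≠ ⊤ := ne_top_of_le_ne_top ENNReal.ofReal_ne_top hFK
  have henorm : ∀ z : ℂ, ENNReal.ofReal (‖z‖ ^ p) = ‖z‖ₑ ^ p := fun z => by
    rw [← ENNReal.ofReal_rpow_of_nonneg (norm_nonneg z) hp.le, ofReal_norm]
  have hfpm : AEStronglyMeasurable (fun x : ℝ => ‖f x‖ ^ p) ν :=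
    (hfm.norm.aemeasurable.pow_const p).aestronglyMeasurable
  constructor
  · rw [intervalIntegrable_iff_integrableOn_Ioo_of_le (by norm_num)]
    refine ⟨hfpm, ?_⟩
    rw [hasFiniteIntegral_iff_ofReal (Eventually.of_forall fun _ => by positivity)]
    simp only [henorm]
    exact hmain.trans_lt (ENNReal.div_lt_top hFtop (by simp))
  · rw [intervalIntegral.integral_of_le (by norm_num), integral_Ioc_eq_integral_Ioo,
      intervalIntegral.integral_of_le (by positivity), integral_Ioc_eq_integral_Ioo,
      integral_eq_lintegral_of_nonneg_ae (Eventually.of_forall fun _ => by positivity) hfpm,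
      integral_eq_lintegral_of_nonneg_ae (Eventually.of_forall fun _ => by positivity)
        (hFm.norm.aemeasurable.pow_const p).aestronglyMeasurable]
    simp only [henorm]
    refine (ENNReal.toReal_mono (ENNReal.div_lt_top hFtop (by simp)).ne hmain).trans_eq ?_
    rw [ENNReal.toReal_div]
    simp
    ring
end

section
/- Let φ and ψ be analytic functions on the unit disk belonging to the Hardy space H^p for some p > 1. Then for every real t, ∫_{-1}^{1} (|φ(x e^{it})| + |ψ(x e^{it})|)^p dx ≤ (1/2) ∫₀^{2π} (|φ(e^{iθ})| + |ψ(e^{iθ})|)^p dθ, where φ(e^{iθ}), ψ(e^{iθ}) denote radial boundary values. -/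
open Complex MeasureTheory Real Filter
open scoped ENNReal Topology

theorem integral_norm_sq_le_half_circle {G : ℂ → ℂ} (hG : Differentiable ℂ G) :
    ∫ x in (-1 : ℝ)..1, ‖G x‖ ^ 2 ≤ (1 / 2) * ∫ θ in (0 : ℝ)..2 * π, ‖G (circleMap 0 1 θ)‖ ^ 2 := by
  set H : ℂ → ℂ := fun z => G z * (starRingEnd ℂ) (G ((starRingEnd ℂ) z)) with hHdef
  have hH : Differentiable ℂ H := by
    refine hG.mul fun z => ?_
    have h := (hG (star z)).star_star
    rw [star_star] at h
    exact h
  obtain ⟨K, hK⟩ := (hH.differentiableOn (s := Metric.ball 0 2)).isExactOn_ball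
  have hR : ∫ x in (-1 : ℝ)..1, H x = K 1 - K (-1) := by
    have := intervalIntegral.integral_eq_sub_of_hasDerivAt (a := -1) (b := 1)
      (f := fun x : ℝ => K x) (f' := fun x : ℝ => H x) (fun x hx => ?_) ?_
    · simpa using this
    · rw [Set.uIcc_of_le (by norm_num)] at hx
      refine (hK x ?_).comp_ofReal
      have : |x| ≤ 1 := abs_le.2 hx
      simp only [mem_ball_zero_iff, norm_real, Real.norm_eq_abs]
      linarith
    · exact (hH.continuous.comp continuous_ofReal).intervalIntegrable _ _
  have hC : ∫ θ in (0 : ℝ)..π, (circleMap 0 1 θ * I) * H (circleMap 0 1 θ) = K (-1) - K 1 := by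
    have := intervalIntegral.integral_eq_sub_of_hasDerivAt (a := 0) (b := π)
      (f := fun x : ℝ => K (circleMap 0 1 x))
      (f' := fun θ : ℝ => (circleMap 0 1 θ * I) * H (circleMap 0 1 θ)) (fun x hx => ?_) ?_
    · simpa [circleMap] using this
    · have h := (hK (circleMap 0 1 x) (by simp)).comp_of_eq x (hasDerivAt_circleMap 0 1 x) rfl
      exact h.congr_deriv (mul_comm _ _)
    · exact Continuous.intervalIntegrable (((continuous_circleMap 0 1).mul continuous_const).mul
        (hH.continuous.comp (continuous_circleMap 0 1))) _ _
  have hcont : Continuous fun θ : ℝ => ‖G (circleMap 0 1 θ)‖ ^ 2 :=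
    (hG.continuous.comp (continuous_circleMap 0 1)).norm.pow 2
  have hcont' : Continuous fun θ : ℝ => ‖G (circleMap 0 1 (-θ))‖ ^ 2 := hcont.comp continuous_neg
  have hconj (θ : ℝ) : (starRingEnd ℂ) (circleMap 0 1 θ) = circleMap 0 1 (-θ) := by
    simp [circleMap, ← Complex.exp_conj]
  have hreal : ((∫ x in (-1 : ℝ)..1, ‖G x‖ ^ 2 : ℝ) : ℂ) = K 1 - K (-1) := by
    rw [← hR, ← intervalIntegral.integral_ofReal]
    refine intervalIntegral.integral_congr fun x _ => ?_
    simp [hHdef, mul_conj, normSq_eq_norm_sq]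
  have hper : Function.Periodic (fun θ : ℝ => ‖G (circleMap 0 1 θ)‖ ^ 2) (2 * π) := fun θ => by
    simp [periodic_circleMap 0 1 θ]
  have hshift := hper.intervalIntegral_add_eq (-π) 0
  rw [show -π + 2 * π = π by ring, zero_add] at hshift
  have hneg : ∫ θ in (0 : ℝ)..π, ‖G (circleMap 0 1 (-θ))‖ ^ 2 =
      ∫ θ in (-π)..0, ‖G (circleMap 0 1 θ)‖ ^ 2 := by
    simpa using intervalIntegral.integral_comp_neg (a := 0) (b := π)
      fun θ : ℝ => ‖G (circleMap 0 1 θ)‖ ^ 2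
  calc ∫ x in (-1 : ℝ)..1, ‖G x‖ ^ 2
      ≤ ‖((∫ x in (-1 : ℝ)..1, ‖G x‖ ^ 2 : ℝ) : ℂ)‖ := by
        rw [norm_real]; exact le_abs_self _
    _ = ‖∫ θ in (0 : ℝ)..π, (circleMap 0 1 θ * I) * H (circleMap 0 1 θ)‖ := by
        rw [hreal, hC, norm_sub_rev]
    _ ≤ ∫ θ in (0 : ℝ)..π,
          (1 / 2) * (‖G (circleMap 0 1 (-θ))‖ ^ 2 + ‖G (circleMap 0 1 θ)‖ ^ 2) := by
        refine intervalIntegral.norm_integral_le_of_norm_le pi_pos.le (ae_of_all _ fun θ _ => ?_)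
          (Continuous.intervalIntegrable ((hcont'.add hcont).const_mul _) _ _)
        simp only [hHdef, hconj, norm_mul, norm_circleMap_zero, norm_I, RCLike.norm_conj]
        nlinarith [sq_nonneg (‖G (circleMap 0 1 (-θ))‖ - ‖G (circleMap 0 1 θ)‖)]
    _ = (1 / 2) * ∫ θ in (0 : ℝ)..2 * π, ‖G (circleMap 0 1 θ)‖ ^ 2 := by
        rw [intervalIntegral.integral_const_mul, intervalIntegral.integral_add
          (hcont'.intervalIntegrable _ _)
          (hcont.intervalIntegrable _ _), hneg, intervalIntegral.integral_add_adjacent_intervals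
          (hcont.intervalIntegrable _ _) (hcont.intervalIntegrable _ _), hshift]

theorem exists_differentiable_re_approx {u : ℂ → ℝ} (hu : ContinuousOn u (Metric.sphere 0 1))
    {δ : ℝ} (hδ : 0 < δ) :
    ∃ q : ℂ → ℂ, Differentiable ℂ q ∧ ∀ z ∈ Metric.sphere (0 : ℂ) 1, |(q z).re - u z| < δ := by
  have key : ∀ f ∈ Submodule.span ℂ (Set.range (@fourier (2 * π))),
      ∃ q₁ q₂ : ℂ → ℂ, Differentiable ℂ q₁ ∧ Differentiable ℂ q₂ ∧
        ∀ x, f x = q₁ (AddCircle.toCircle x) + (starRingEnd ℂ) (q₂ (AddCircle.toCircle x)) := by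
    intro f hf
    induction hf using Submodule.span_induction with
    | mem f hf =>
      obtain ⟨n, rfl⟩ := hf
      obtain ⟨n, rfl | rfl⟩ := n.eq_nat_or_neg
      · exact ⟨fun z => z ^ n, fun _ => 0, by fun_prop, by fun_prop, fun x => by
          simp [fourier_apply, AddCircle.toCircle_nsmul]⟩
      · exact ⟨fun _ => 0, fun z => z ^ n, by fun_prop, by fun_prop, fun x => by
          rw [fourier_neg]
          simp [fourier_apply, AddCircle.toCircle_nsmul]⟩
    | zero => exact ⟨0, 0, by fun_prop, by fun_prop, by simp⟩
    | add f g _ _ hf hg =>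
      obtain ⟨a, b, ha, hb, h⟩ := hf
      obtain ⟨a', b', ha', hb', h'⟩ := hg
      exact ⟨a + a', b + b', ha.add ha', hb.add hb', fun x => by simp [h, h']; ring⟩
    | smul c f _ hf =>
      obtain ⟨a, b, ha, hb, h⟩ := hf
      exact ⟨c • a, (starRingEnd ℂ) c • b, ha.const_smul _, hb.const_smul _, fun x => by
        simp [h]; ring⟩
  have hU : Continuous fun x : AddCircle (2 * π) => (u (AddCircle.toCircle x) : ℂ) :=
    continuous_ofReal.comp (hu.comp_continuous
      (continuous_subtype_val.comp AddCircle.continuous_toCircle)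
      fun x => mem_sphere_zero_iff_norm.2 (Circle.norm_coe _))
  have : Fact (0 < 2 * π) := ⟨two_pi_pos⟩
  have hmem : (⟨_, hU⟩ : C(AddCircle (2 * π), ℂ)) ∈
      closure (Submodule.span ℂ (Set.range (@fourier (2 * π))) : Set C(AddCircle (2 * π), ℂ)) := by
    rw [← Submodule.topologicalClosure_coe, span_fourier_closure_eq_top]
    trivial
  obtain ⟨f, hf, hd⟩ := Metric.mem_closure_iff.1 hmem δ hδ
  obtain ⟨q₁, q₂, h₁, h₂, h⟩ := key f hf
  refine ⟨q₁ + q₂, h₁.add h₂, fun z hz => ?_⟩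
  obtain ⟨x, hx⟩ := (AddCircle.homeomorphCircle two_pi_pos.ne').surjective (⟨z, hz⟩ : Circle)
  have hxz : ((AddCircle.toCircle x : Circle) : ℂ) = z := by
    rw [← AddCircle.homeomorphCircle_apply two_pi_pos.ne', hx]
  have hle := (ContinuousMap.dist_apply_le_dist x).trans_lt hd
  rw [dist_comm, dist_eq_norm, h] at hle
  dsimp only [ContinuousMap.coe_mk] at hle
  rw [hxz] at hle
  refine lt_of_le_of_lt ?_ hle
  refine le_trans (le_of_eq ?_) (abs_re_le_norm _)
  simp

theorem exists_norm_add_mul_eq (a b : ℂ) : ∃ c : ℂ, ‖c‖ = 1 ∧ ‖a + c * b‖ = ‖a‖ + ‖b‖ := by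
  refine ⟨cexp ((arg a - arg b : ℝ) * I), norm_exp_ofReal_mul_I _, ?_⟩
  have : a + cexp ((arg a - arg b : ℝ) * I) * b = (‖a‖ + ‖b‖ : ℝ) * cexp (arg a * I) := by
    have ha := norm_mul_exp_arg_mul_I a
    have hb := norm_mul_exp_arg_mul_I b
    have : cexp ((arg a - arg b : ℝ) * I) * cexp (arg b * I) = cexp (arg a * I) := by
      rw [← Complex.exp_add]; congr 1; push_cast; ring
    push_cast at this ⊢
    linear_combination (‖b‖ : ℂ) * this - ha - cexp ((arg a - arg b) * I) * hb
  rw [this, norm_mul, norm_exp_ofReal_mul_I, mul_one, norm_real, Real.norm_of_nonneg (by positivity)]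

theorem norm_add_norm_le_exp_re {f g q : ℂ → ℂ} (hf : DiffContOnCl ℂ f (Metric.ball 0 1))
    (hg : DiffContOnCl ℂ g (Metric.ball 0 1)) (hq : Differentiable ℂ q)
    (h : ∀ z ∈ Metric.sphere (0 : ℂ) 1, ‖f z‖ + ‖g z‖ ≤ rexp (q z).re) {z : ℂ}
    (hz : z ∈ Metric.closedBall (0 : ℂ) 1) : ‖f z‖ + ‖g z‖ ≤ rexp (q z).re := by
  obtain ⟨c, hc, hcz⟩ := exists_norm_add_mul_eq (f z) (g z)
  have hE : Differentiable ℂ fun w => cexp (-q w) := hq.neg.cexp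
  have hd : DiffContOnCl ℂ (fun w => cexp (-q w) • (f w + c • g w)) (Metric.ball 0 1) :=
    hE.diffContOnCl.smul (hf.add (hg.const_smul c))
  have := norm_le_of_forall_mem_frontier_norm_le Metric.isBounded_ball hd (C := 1) (fun w hw => ?_)
    (z := z) (by rwa [closure_ball _ one_ne_zero])
  · rw [smul_eq_mul, smul_eq_mul, norm_mul, hcz, Complex.norm_exp, neg_re, Real.exp_neg,
      inv_mul_le_iff₀ (Real.exp_pos _), mul_one] at this
    exact this
  · rw [frontier_ball _ one_ne_zero] at hw
    rw [smul_eq_mul, smul_eq_mul, norm_mul, Complex.norm_exp, neg_re, Real.exp_neg,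
      inv_mul_le_iff₀ (Real.exp_pos _), mul_one]
    refine (norm_add_le _ _).trans ?_
    rw [norm_mul, hc, one_mul]
    exact h w hw

theorem integral_sum_norm_rpow_le_half_circle {p : ℝ} (hp : 0 < p) {f g : ℂ → ℂ}
    (hf : DiffContOnCl ℂ f (Metric.ball 0 1)) (hg : DiffContOnCl ℂ g (Metric.ball 0 1)) :
    ∫ x in (-1 : ℝ)..1, (‖f x‖ + ‖g x‖) ^ p ≤
      (1 / 2) * ∫ θ in (0 : ℝ)..2 * π, (‖f (circleMap 0 1 θ)‖ + ‖g (circleMap 0 1 θ)‖) ^ p := by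
  have hcl : closure (Metric.ball (0 : ℂ) 1) = Metric.closedBall 0 1 := closure_ball _ one_ne_zero
  have hfc : ContinuousOn f (Metric.closedBall 0 1) := hcl ▸ hf.continuousOn
  have hgc : ContinuousOn g (Metric.closedBall 0 1) := hcl ▸ hg.continuousOn
  have hΦ : ContinuousOn (fun z => ‖f z‖ + ‖g z‖) (Metric.closedBall 0 1) := hfc.norm.add hgc.norm
  have hΦc : Continuous fun θ : ℝ => ‖f (circleMap 0 1 θ)‖ + ‖g (circleMap 0 1 θ)‖ :=
    hΦ.comp_continuous (continuous_circleMap 0 1) fun θ => by simp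
  have hbound : ∀ δ : ℝ, 0 < δ → ∫ x in (-1 : ℝ)..1, (‖f x‖ + ‖g x‖) ^ p ≤
      (1 / 2) * ∫ θ in (0 : ℝ)..2 * π,
        ((‖f (circleMap 0 1 θ)‖ + ‖g (circleMap 0 1 θ)‖ + δ) * rexp δ) ^ p := by
    intro δ hδ
    have hpos (z : ℂ) : 0 < ‖f z‖ + ‖g z‖ + δ := by positivity
    obtain ⟨q, hq, hqu⟩ := exists_differentiable_re_approx
      (u := fun z => Real.log (‖f z‖ + ‖g z‖ + δ) + δ / 2)
      ((((hΦ.mono Metric.sphere_subset_closedBall).add continuousOn_const).log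
        fun z _ => (hpos z).ne').add continuousOn_const) (half_pos hδ)
    have hdisk : ∀ z ∈ Metric.closedBall (0 : ℂ) 1, ‖f z‖ + ‖g z‖ ≤ rexp (q z).re := by
      refine fun z hz => norm_add_norm_le_exp_re hf hg hq (fun w hw => ?_) hz
      have h1 := (abs_lt.1 (hqu w hw)).1
      calc ‖f w‖ + ‖g w‖ ≤ ‖f w‖ + ‖g w‖ + δ := by linarith
        _ = rexp (Real.log (‖f w‖ + ‖g w‖ + δ)) := (Real.exp_log (hpos w)).symm
        _ ≤ rexp (q w).re := Real.exp_le_exp.2 (by linarith)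
    have hsq (z : ℂ) : ‖cexp ((p / 2 : ℝ) * q z)‖ ^ 2 = rexp (q z).re ^ p := by
      rw [Complex.norm_exp, re_ofReal_mul, ← Real.exp_nat_mul, ← Real.exp_mul]
      congr 1; push_cast; ring
    have hG : Differentiable ℂ fun z => cexp ((p / 2 : ℝ) * q z) := (hq.const_mul _).cexp
    calc ∫ x in (-1 : ℝ)..1, (‖f x‖ + ‖g x‖) ^ p
        ≤ ∫ x in (-1 : ℝ)..1, ‖cexp ((p / 2 : ℝ) * q x)‖ ^ 2 := by
          have hxm : ∀ x ∈ Set.Icc (-1 : ℝ) 1, (x : ℂ) ∈ Metric.closedBall (0 : ℂ) 1 := by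
            intro x hx
            simpa using abs_le.2 hx
          refine intervalIntegral.integral_mono_on (by norm_num) ?_ ?_ fun x hx => ?_
          · refine ContinuousOn.intervalIntegrable ?_
            rw [Set.uIcc_of_le (by norm_num)]
            exact (hΦ.comp continuous_ofReal.continuousOn hxm).rpow_const fun _ _ => Or.inr hp.le
          · exact Continuous.intervalIntegrable
              ((hG.continuous.comp continuous_ofReal).norm.pow 2) _ _
          · rw [hsq]
            exact Real.rpow_le_rpow (by positivity) (hdisk _ (hxm x hx)) hp.le
      _ ≤ _ := integral_norm_sq_le_half_circle hG
      _ ≤ _ := by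
          refine mul_le_mul_of_nonneg_left ?_ (by norm_num)
          refine intervalIntegral.integral_mono_on two_pi_pos.le ?_ ?_ fun θ _ => ?_
          · exact Continuous.intervalIntegrable
              ((hG.continuous.comp (continuous_circleMap 0 1)).norm.pow 2) _ _
          · exact Continuous.intervalIntegrable (((hΦc.add continuous_const).mul
              continuous_const).rpow_const fun _ => Or.inr hp.le) _ _
          · rw [hsq]
            refine Real.rpow_le_rpow (Real.exp_pos _).le ?_ hp.le
            have h2 := (abs_lt.1 (hqu (circleMap 0 1 θ) (by simp))).2
            rw [← Real.exp_log (hpos (circleMap 0 1 θ)), ← Real.exp_add]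
            exact Real.exp_le_exp.2 (by linarith)
  have hlim : Continuous fun δ : ℝ => (1 / 2) * ∫ θ in (0 : ℝ)..2 * π,
        ((‖f (circleMap 0 1 θ)‖ + ‖g (circleMap 0 1 θ)‖ + δ) * rexp δ) ^ p := by
    refine continuous_const.mul
      (intervalIntegral.continuous_parametric_intervalIntegral_of_continuous' ?_ _ _)
    refine Continuous.rpow_const ?_ fun _ => Or.inr hp.le
    exact ((hΦc.comp continuous_snd).add continuous_fst).mul (Real.continuous_exp.comp continuous_fst)
  have := ge_of_tendsto ((hlim.tendsto 0).mono_left (nhdsWithin_le_nhds (s := Set.Ioi 0)))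
    (eventually_nhdsWithin_of_forall fun δ hδ => hbound δ hδ)
  simpa using this

theorem tendsto_eLpNorm_one_sub_of_eLpNorm_le {α : Type*} [MeasurableSpace α] {μ : Measure α}
    [IsFiniteMeasure μ] {p : ℝ} (hp : 1 < p) {f : ℕ → α → ℝ} {g : α → ℝ}
    (hf : ∀ n, AEStronglyMeasurable (f n) μ) {C : ℝ≥0∞} (hC : C ≠ ∞)
    (hfC : ∀ n, eLpNorm (f n) (ENNReal.ofReal p) μ ≤ C)
    (hg : MemLp g (ENNReal.ofReal p) μ)
    (hfg : ∀ᵐ x ∂μ, Tendsto (fun n => f n x) atTop (𝓝 (g x))) :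
    Tendsto (fun n => eLpNorm (f n - g) 1 μ) atTop (𝓝 0) := by
  have hp1 : (1 : ℝ≥0∞) ≤ ENNReal.ofReal p := by simpa using hp.le
  refine tendsto_Lp_finite_of_tendsto_ae le_rfl ENNReal.one_ne_top hf (hg.mono_exponent hp1) ?_ hfg
  intro ε hε
  have ha : 0 < 1 - 1 / p := by
    rw [sub_pos, div_lt_one (by linarith)]
    exact hp
  have hlim : Tendsto (fun δ : ℝ => C * ENNReal.ofReal δ ^ (1 - 1 / p)) (𝓝[>] 0) (𝓝 0) := by
    have h1 : Tendsto (fun δ : ℝ => C * ENNReal.ofReal δ ^ (1 - 1 / p)) (𝓝 0)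
        (𝓝 (C * ENNReal.ofReal 0 ^ (1 - 1 / p))) :=
      ENNReal.Tendsto.const_mul
        (((ENNReal.continuous_rpow_const).comp ENNReal.continuous_ofReal).tendsto 0) (Or.inr hC)
    rw [ENNReal.ofReal_zero, ENNReal.zero_rpow_of_pos ha, mul_zero] at h1
    exact h1.mono_left nhdsWithin_le_nhds
  obtain ⟨δ, hδ, hδ0⟩ := ((hlim.eventually_le_const (ENNReal.ofReal_pos.2 hε)).and
    self_mem_nhdsWithin).exists
  refine ⟨δ, hδ0, fun n s hs hμ => ?_⟩
  rw [eLpNorm_indicator_eq_eLpNorm_restrict hs]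
  refine le_trans ?_ hδ
  refine (eLpNorm_le_eLpNorm_mul_rpow_measure_univ hp1 (hf n).restrict).trans ?_
  rw [ENNReal.toReal_ofReal (by linarith), ENNReal.toReal_one, div_one, Measure.restrict_apply_univ]
  gcongr
  exact (eLpNorm_restrict_le _ _ _ _).trans (hfC n)

/-- The Poisson kernel of the unit disk, normalized to have total mass one on `(0, 2π]`. -/
noncomputable def poissonDensity (z : ℂ) (θ : ℝ) : ℝ≥0∞ :=
  ENNReal.ofReal ((2 * π)⁻¹ * poissonKernel 0 z (circleMap 0 1 θ))

theorem poissonKernel_circleMap_nonneg {z : ℂ} (hz : z ∈ Metric.ball (0 : ℂ) 1) (θ : ℝ) :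
    0 ≤ poissonKernel 0 z (circleMap 0 1 θ) := by
  have : ‖z‖ < 1 := by simpa using hz
  rw [poissonKernel_def]
  refine div_nonneg ?_ (by positivity)
  simp only [sub_zero, norm_circleMap_zero, abs_one]
  nlinarith [norm_nonneg z]

theorem continuous_poissonKernel_circleMap {z : ℂ} (hz : z ∈ Metric.ball (0 : ℂ) 1) :
    Continuous fun θ => poissonKernel 0 z (circleMap 0 1 θ) := by
  rw [poissonKernel_eq_re_herglotzRieszKernel]
  exact continuous_re.comp ((continuousOn_herglotzRieszKernel_sphere hz).comp_continuous
    (continuous_circleMap 0 1) fun θ => by simp)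

theorem poissonDensity_le {z : ℂ} (hz : z ∈ Metric.ball (0 : ℂ) 1) (θ : ℝ) :
    poissonDensity z θ ≤ ENNReal.ofReal ((2 * π)⁻¹ * ((1 + ‖z‖) / (1 - ‖z‖))) := by
  refine ENNReal.ofReal_le_ofReal (mul_le_mul_of_nonneg_left ?_ (by positivity))
  rw [poissonKernel_eq_re_herglotzRieszKernel]
  simpa [herglotzRieszKernel_def] using
    re_herglotzRieszKernel_le (z := circleMap 0 1 θ) (by simp) hz

theorem measurable_uncurry_poissonDensity_circleMap (r : ℝ) :
    Measurable (Function.uncurry fun θ η => poissonDensity (circleMap 0 r θ) η) := by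
  have h1 : Measurable fun x : ℝ × ℝ => circleMap 0 r x.1 :=
    ((continuous_circleMap 0 r).comp continuous_fst).measurable
  have h2 : Measurable fun x : ℝ × ℝ => circleMap 0 1 x.2 :=
    ((continuous_circleMap 0 1).comp continuous_snd).measurable
  simp only [Function.uncurry_def, poissonDensity, poissonKernel_def]
  fun_prop

theorem poissonDensity_circleMap_comm (r θ η : ℝ) :
    poissonDensity (circleMap 0 r θ) η = poissonDensity (circleMap 0 r η) θ := by
  have h : ‖circleMap 0 1 η - circleMap 0 r θ‖ = ‖circleMap 0 1 θ - circleMap 0 r η‖ := by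
    rw [← Complex.norm_conj]
    have : (starRingEnd ℂ) (circleMap 0 1 η - circleMap 0 r θ) =
        cexp (-(η + θ : ℝ) * I) * (circleMap 0 1 θ - circleMap 0 r η) := by
      simp only [circleMap, zero_add, map_sub, map_mul, conj_ofReal, ← Complex.exp_conj, conj_I]
      have e1 : cexp (-(η + θ : ℝ) * I) * cexp (θ * I) = cexp (η * -I) := by
        rw [← Complex.exp_add]; congr 1; push_cast; ring
      have e2 : cexp (-(η + θ : ℝ) * I) * cexp (η * I) = cexp (θ * -I) := by
        rw [← Complex.exp_add]; congr 1; push_cast; ring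
      rw [← e1, ← e2]; push_cast; ring
    rw [this, norm_mul, ← ofReal_neg, norm_exp_ofReal_mul_I, one_mul]
  simp [poissonDensity, poissonKernel_def, h]

theorem lintegral_poissonDensity {z : ℂ} (hz : z ∈ Metric.ball (0 : ℂ) 1) :
    ∫⁻ θ in Set.Ioc 0 (2 * π), poissonDensity z θ = 1 := by
  have h := (diffContOnCl_const (c := (1 : ℂ))).circleAverage_poissonKernel_smul hz
  have hr : (2 * π)⁻¹ * ∫ θ in (0 : ℝ)..2 * π, poissonKernel 0 z (circleMap 0 1 θ) = 1 := by
    rw [circleAverage_def] at h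
    have h' : (fun θ => (poissonKernel 0 z • fun _ : ℂ => (1 : ℂ)) (circleMap 0 1 θ)) =
        fun θ => ((poissonKernel 0 z (circleMap 0 1 θ) : ℝ) : ℂ) := by
      ext θ; simp
    rw [h', intervalIntegral.integral_ofReal] at h
    rw [real_smul] at h
    exact_mod_cast h
  rw [← intervalIntegral.integral_const_mul, intervalIntegral.integral_of_le two_pi_pos.le] at hr
  unfold poissonDensity
  rw [← ofReal_integral_eq_lintegral_ofReal, hr, ENNReal.ofReal_one]
  · exact ((continuous_poissonKernel_circleMap hz).const_mul _).integrableOn_Ioc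
  · exact ae_of_all _ fun θ => mul_nonneg (by positivity) (poissonKernel_circleMap_nonneg hz θ)

theorem ofReal_norm_add_norm_le_lintegral_poissonDensity {f g : ℂ → ℂ}
    (hf : DiffContOnCl ℂ f (Metric.ball 0 1)) (hg : DiffContOnCl ℂ g (Metric.ball 0 1)) {z : ℂ}
    (hz : z ∈ Metric.ball (0 : ℂ) 1) :
    ENNReal.ofReal (‖f z‖ + ‖g z‖) ≤ ∫⁻ θ in Set.Ioc 0 (2 * π),
      poissonDensity z θ * ‖‖f (circleMap 0 1 θ)‖ + ‖g (circleMap 0 1 θ)‖‖ₑ := by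
  obtain ⟨c, hc, hcz⟩ := exists_norm_add_mul_eq (f z) (g z)
  have h := (hf.add (hg.const_smul c)).circleAverage_poissonKernel_smul hz
  have hval : ‖(f + c • g) z‖ = ‖f z‖ + ‖g z‖ := by simpa using hcz
  rw [← hval, ← h, circleAverage_def, ofReal_norm,
    intervalIntegral.integral_of_le two_pi_pos.le, ← integral_smul]
  refine (enorm_integral_le_lintegral_enorm _).trans (lintegral_mono fun θ => ?_)
  simp only [poissonDensity, ← ofReal_norm]
  rw [← ENNReal.ofReal_mul
    (mul_nonneg (by positivity) (poissonKernel_circleMap_nonneg hz θ))]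
  refine ENNReal.ofReal_le_ofReal ?_
  rw [Pi.smul_apply', norm_smul, norm_smul, Real.norm_of_nonneg (by positivity),
    Real.norm_of_nonneg (poissonKernel_circleMap_nonneg hz θ), mul_assoc,
    Real.norm_of_nonneg (by positivity)]
  have : ‖(f + c • g) (circleMap 0 1 θ)‖ ≤ ‖f (circleMap 0 1 θ)‖ + ‖g (circleMap 0 1 θ)‖ := by
    refine (norm_add_le _ _).trans ?_
    simp [hc]
  have := poissonKernel_circleMap_nonneg hz θ
  gcongr

theorem lintegral_rpow_lintegral_poissonDensity_le {p : ℝ} (hp : 1 < p) {r : ℝ} (hr0 : 0 ≤ r)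
    (hr1 : r < 1) {H : ℝ → ℝ≥0∞} (hH : AEMeasurable H (volume.restrict (Set.Ioc 0 (2 * π)))) :
    ∫⁻ θ in Set.Ioc 0 (2 * π),
        (∫⁻ η in Set.Ioc 0 (2 * π), poissonDensity (circleMap 0 r θ) η * H η) ^ p ≤
      ∫⁻ η in Set.Ioc 0 (2 * π), H η ^ p := by
  have hp0 : 0 < p := by linarith
  have hz (θ : ℝ) : circleMap 0 r θ ∈ Metric.ball (0 : ℂ) 1 := by
    simpa [abs_of_nonneg hr0] using hr1
  have hm := measurable_uncurry_poissonDensity_circleMap r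
  have hm1 (θ : ℝ) : Measurable fun η => poissonDensity (circleMap 0 r θ) η := hm.of_uncurry_left
  calc ∫⁻ θ in Set.Ioc 0 (2 * π),
        (∫⁻ η in Set.Ioc 0 (2 * π), poissonDensity (circleMap 0 r θ) η * H η) ^ p
      ≤ ∫⁻ θ in Set.Ioc 0 (2 * π),
        ∫⁻ η in Set.Ioc 0 (2 * π), poissonDensity (circleMap 0 r θ) η * H η ^ p := by
        refine lintegral_mono fun θ => ?_
        have hle := ENNReal.lintegral_mul_norm_pow_le (hm1 θ).aemeasurable
          ((hm1 θ).aemeasurable.mul (hH.pow_const p)) (p := 1 - 1 / p) (q := 1 / p)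
          (by rw [sub_nonneg, div_le_one hp0]; exact hp.le) (by positivity) (by ring)
        rw [lintegral_poissonDensity (hz θ), ENNReal.one_rpow, one_mul] at hle
        have heq (η : ℝ) : poissonDensity (circleMap 0 r θ) η ^ (1 - 1 / p) *
            (poissonDensity (circleMap 0 r θ) η * H η ^ p) ^ (1 / p) =
            poissonDensity (circleMap 0 r θ) η * H η := by
          rw [ENNReal.mul_rpow_of_nonneg _ _ (by positivity), ← ENNReal.rpow_mul,
            mul_one_div_cancel hp0.ne', ENNReal.rpow_one, ← mul_assoc,
            ← ENNReal.rpow_add_of_nonneg _ _ (by rw [sub_nonneg, div_le_one hp0]; exact hp.le)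
              (by positivity), sub_add_cancel, ENNReal.rpow_one]
        simp only [Pi.mul_apply, heq] at hle
        calc _ ≤ _ := ENNReal.rpow_le_rpow hle hp0.le
          _ = _ := by rw [← ENNReal.rpow_mul, one_div_mul_cancel hp0.ne', ENNReal.rpow_one]
    _ = ∫⁻ η in Set.Ioc 0 (2 * π),
        ∫⁻ θ in Set.Ioc 0 (2 * π), poissonDensity (circleMap 0 r θ) η * H η ^ p :=
        lintegral_lintegral_swap (hm.aemeasurable.mul (hH.pow_const p).comp_snd)
    _ = ∫⁻ η in Set.Ioc 0 (2 * π), H η ^ p := by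
        refine lintegral_congr fun η => ?_
        simp_rw [poissonDensity_circleMap_comm r _ η]
        rw [lintegral_mul_const _ (hm1 η), lintegral_poissonDensity (hz η), one_mul]

theorem exists_eLpNorm_circleMap_le {p : ℝ} (hp : 0 < p) {φ : ℂ → ℂ}
    (hφ : ContinuousOn φ (Metric.ball 0 1))
    (hφHp : ∃ C : ℝ, ∀ r : ℝ, 0 ≤ r → r < 1 →
      (∫ θ in (0 : ℝ)..2 * π, ‖φ (circleMap 0 r θ)‖ ^ p) ≤ C) :
    ∃ C : ℝ≥0∞, C ≠ ∞ ∧ ∀ r : ℝ, 0 ≤ r → r < 1 →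
      eLpNorm (fun θ => φ (circleMap 0 r θ)) (ENNReal.ofReal p)
        (volume.restrict (Set.Ioc 0 (2 * π))) ≤ C := by
  obtain ⟨C, hC⟩ := hφHp
  refine ⟨ENNReal.ofReal C ^ p⁻¹,
    ENNReal.rpow_ne_top_of_nonneg (by positivity) ENNReal.ofReal_ne_top, fun r hr0 hr1 => ?_⟩
  have hcont : Continuous fun θ => φ (circleMap 0 r θ) :=
    hφ.comp_continuous (continuous_circleMap 0 r) fun θ => by
      simpa [abs_of_nonneg hr0] using hr1
  have hint := (hcont.norm.rpow_const fun _ => Or.inr hp.le).integrableOn_Ioc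
    (μ := volume) (a := 0) (b := 2 * π)
  rw [eLpNorm_eq_lintegral_rpow_enorm_toReal (by simpa using hp) ENNReal.ofReal_ne_top,
    ENNReal.toReal_ofReal hp.le, one_div]
  refine ENNReal.rpow_le_rpow ?_ (by positivity)
  calc ∫⁻ θ in Set.Ioc 0 (2 * π), ‖φ (circleMap 0 r θ)‖ₑ ^ p
      = ∫⁻ θ in Set.Ioc 0 (2 * π), ENNReal.ofReal (‖φ (circleMap 0 r θ)‖ ^ p) := by
        refine lintegral_congr fun θ => ?_
        rw [← ofReal_norm, ENNReal.ofReal_rpow_of_nonneg (norm_nonneg _) hp.le]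
    _ = ENNReal.ofReal (∫ θ in Set.Ioc 0 (2 * π), ‖φ (circleMap 0 r θ)‖ ^ p) :=
        (ofReal_integral_eq_lintegral_ofReal hint (ae_of_all _ fun θ => by positivity)).symm
    _ ≤ ENNReal.ofReal C := by
        rw [← intervalIntegral.integral_of_le two_pi_pos.le]
        exact ENNReal.ofReal_le_ofReal (hC r hr0 hr1)

theorem diffContOnCl_comp_mul {φ : ℂ → ℂ} (hφ : DifferentiableOn ℂ φ (Metric.ball 0 1)) {a : ℂ}
    (ha : ‖a‖ < 1) : DiffContOnCl ℂ (fun z => φ (a * z)) (Metric.ball 0 1) := by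
  refine DifferentiableOn.diffContOnCl ?_
  rw [closure_ball _ one_ne_zero]
  refine hφ.comp (differentiableOn_id.const_mul a) fun z hz => ?_
  have : ‖z‖ ≤ 1 := by simpa using hz
  simp only [mem_ball_zero_iff, norm_mul]
  nlinarith [norm_nonneg a, norm_nonneg z]

/-- The circle means of `|φ| + |ψ|` are bounded by those of the boundary values. -/
theorem integral_circleMap_rpow_le_boundary {p : ℝ} (hp : 1 < p) {φ ψ : ℂ → ℂ} {Fφ Fψ : ℝ → ℂ}
    (hφ : DifferentiableOn ℂ φ (Metric.ball 0 1)) (hψ : DifferentiableOn ℂ ψ (Metric.ball 0 1))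
    (hφHp : ∃ C : ℝ, ∀ r : ℝ, 0 ≤ r → r < 1 →
      (∫ θ in (0 : ℝ)..2 * π, ‖φ (circleMap 0 r θ)‖ ^ p) ≤ C)
    (hψHp : ∃ C : ℝ, ∀ r : ℝ, 0 ≤ r → r < 1 →
      (∫ θ in (0 : ℝ)..2 * π, ‖ψ (circleMap 0 r θ)‖ ^ p) ≤ C)
    (hFφ : ∀ᵐ θ : ℝ, Tendsto (fun r : ℝ => φ (circleMap 0 r θ)) (𝓝[<] 1) (𝓝 (Fφ θ)))
    (hFψ : ∀ᵐ θ : ℝ, Tendsto (fun r : ℝ => ψ (circleMap 0 r θ)) (𝓝[<] 1) (𝓝 (Fψ θ)))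
    {r : ℝ} (hr0 : 0 ≤ r) (hr1 : r < 1) :
    ∫ θ in (0 : ℝ)..2 * π, (‖φ (circleMap 0 r θ)‖ + ‖ψ (circleMap 0 r θ)‖) ^ p ≤
      ∫ θ in (0 : ℝ)..2 * π, (‖Fφ θ‖ + ‖Fψ θ‖) ^ p := by
  have hp0 : 0 < p := by linarith
  set μ : Measure ℝ := volume.restrict (Set.Ioc 0 (2 * π))
  obtain ⟨C₁, hC₁, hb₁⟩ := exists_eLpNorm_circleMap_le hp0 hφ.continuousOn hφHp
  obtain ⟨C₂, hC₂, hb₂⟩ := exists_eLpNorm_circleMap_le hp0 hψ.continuousOn hψHp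
  obtain ⟨s, -, hs, hslim⟩ := exists_seq_strictMono_tendsto' (zero_lt_one' ℝ)
  have hslim' : Tendsto s atTop (𝓝[<] 1) :=
    tendsto_nhdsWithin_iff.2 ⟨hslim, Eventually.of_forall fun n => (hs n).2⟩
  have hcont {χ : ℂ → ℂ} (hχ : DifferentiableOn ℂ χ (Metric.ball 0 1)) {r : ℝ} (hr0 : 0 ≤ r)
      (hr1 : r < 1) : Continuous fun θ => ‖χ (circleMap 0 r θ)‖ :=
    (hχ.continuousOn.comp_continuous (continuous_circleMap 0 r) fun θ => by
      simpa [abs_of_nonneg hr0] using hr1).norm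
  set h : ℕ → ℝ → ℝ := fun n θ => ‖φ (circleMap 0 (s n) θ)‖ + ‖ψ (circleMap 0 (s n) θ)‖
  set H : ℝ → ℝ := fun θ => ‖Fφ θ‖ + ‖Fψ θ‖ with hHdef
  have hmeas (n : ℕ) : AEStronglyMeasurable (h n) μ :=
    ((hcont hφ (hs n).1.le (hs n).2).add (hcont hψ (hs n).1.le (hs n).2)).aestronglyMeasurable
  have hbound (n : ℕ) : eLpNorm (h n) (ENNReal.ofReal p) μ ≤ C₁ + C₂ := by
    refine (eLpNorm_add_le (hcont hφ (hs n).1.le (hs n).2).aestronglyMeasurable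
      (hcont hψ (hs n).1.le (hs n).2).aestronglyMeasurable (by simpa using hp.le)).trans ?_
    rw [eLpNorm_norm, eLpNorm_norm]
    exact add_le_add (hb₁ _ (hs n).1.le (hs n).2) (hb₂ _ (hs n).1.le (hs n).2)
  have hlim : ∀ᵐ θ ∂μ, Tendsto (fun n => h n θ) atTop (𝓝 (H θ)) := by
    filter_upwards [ae_restrict_of_ae hFφ, ae_restrict_of_ae hFψ] with θ h₁ h₂
    exact (h₁.comp hslim').norm.add (h₂.comp hslim').norm
  have hHm : AEStronglyMeasurable H μ := aestronglyMeasurable_of_tendsto_ae atTop hmeas hlim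
  have hHp : MemLp H (ENNReal.ofReal p) μ :=
    ⟨hHm, (Lp.eLpNorm_le_of_ae_tendsto (Eventually.of_forall hbound) hmeas hlim).trans_lt
      (ENNReal.add_lt_top.2 ⟨hC₁.lt_top, hC₂.lt_top⟩)⟩
  have hL1 := tendsto_eLpNorm_one_sub_of_eLpNorm_le hp hmeas (ENNReal.add_ne_top.2 ⟨hC₁, hC₂⟩)
    hbound hHp hlim
  have hPoisson (z : ℂ) (hz : z ∈ Metric.ball (0 : ℂ) 1) :
      ENNReal.ofReal (‖φ z‖ + ‖ψ z‖) ≤ ∫⁻ η, poissonDensity z η * ‖H η‖ₑ ∂μ := by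
    set M := ENNReal.ofReal ((2 * π)⁻¹ * ((1 + ‖z‖) / (1 - ‖z‖)))
    have hPm : Measurable (poissonDensity z) :=
      ((continuous_poissonKernel_circleMap hz).const_mul _).measurable.ennreal_ofReal
    have hle (n : ℕ) : ENNReal.ofReal (‖φ (s n * z)‖ + ‖ψ (s n * z)‖) ≤
        ∫⁻ η, poissonDensity z η * ‖H η‖ₑ ∂μ + M * eLpNorm (h n - H) 1 μ := by
      have hsn : ‖(s n : ℂ)‖ < 1 := by
        rw [norm_real, Real.norm_of_nonneg (hs n).1.le]; exact (hs n).2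
      have hmul (η : ℝ) : (s n : ℂ) * circleMap 0 1 η = circleMap 0 (s n) η := by
        simp [circleMap]
      refine (ofReal_norm_add_norm_le_lintegral_poissonDensity (diffContOnCl_comp_mul hφ hsn)
        (diffContOnCl_comp_mul hψ hsn) hz).trans ?_
      simp only [hmul]
      rw [eLpNorm_one_eq_lintegral_enorm, ← lintegral_const_mul'' _ ((hmeas n).sub hHm).enorm,
        ← lintegral_add_left' (hPm.aemeasurable.fun_mul hHm.enorm)]
      refine lintegral_mono fun η => ?_
      calc poissonDensity z η * ‖h n η‖ₑ
          ≤ poissonDensity z η * (‖H η‖ₑ + ‖h n η - H η‖ₑ) := by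
            gcongr
            calc ‖h n η‖ₑ = ‖H η + (h n η - H η)‖ₑ := by rw [add_sub_cancel]
              _ ≤ _ := enorm_add_le _ _
        _ ≤ _ := by
            rw [mul_add]
            exact add_le_add le_rfl (mul_le_mul_left (poissonDensity_le hz η) _)
    have hsz : Tendsto (fun n => (s n : ℂ) * z) atTop (𝓝 z) := by
      simpa using ((continuous_ofReal.tendsto 1).comp hslim).mul_const z
    have hnhds : Metric.ball (0 : ℂ) 1 ∈ 𝓝 z := Metric.isOpen_ball.mem_nhds hz
    have hleft := ENNReal.tendsto_ofReal
      (((hφ.continuousOn.continuousAt hnhds).tendsto.comp hsz).norm.add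
        ((hψ.continuousOn.continuousAt hnhds).tendsto.comp hsz).norm)
    have hright : Tendsto (fun n => ∫⁻ η, poissonDensity z η * ‖H η‖ₑ ∂μ +
        M * eLpNorm (h n - H) 1 μ) atTop (𝓝 (∫⁻ η, poissonDensity z η * ‖H η‖ₑ ∂μ)) := by
      simpa using (ENNReal.Tendsto.const_mul hL1 (Or.inr ENNReal.ofReal_ne_top)).const_add
        (∫⁻ η, poissonDensity z η * ‖H η‖ₑ ∂μ)
    exact le_of_tendsto_of_tendsto' hleft hright hle
  have hHint : Integrable (fun θ => H θ ^ p) μ := by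
    have := hHp.integrable_norm_rpow (by simpa using hp0) ENNReal.ofReal_ne_top
    rw [ENNReal.toReal_ofReal hp0.le] at this
    refine this.congr (ae_of_all _ fun θ => ?_)
    simp only [hHdef]
    rw [Real.norm_of_nonneg (by positivity)]
  have hHnn (θ : ℝ) : 0 ≤ H θ := by positivity
  rw [intervalIntegral.integral_of_le two_pi_pos.le, intervalIntegral.integral_of_le two_pi_pos.le]
  refine (ENNReal.ofReal_le_ofReal_iff (integral_nonneg fun θ => by positivity)).1 ?_
  rw [ofReal_integral_eq_lintegral_ofReal _ (ae_of_all _ fun θ => by positivity),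
    ofReal_integral_eq_lintegral_ofReal hHint (ae_of_all _ fun θ => by positivity)]
  · calc ∫⁻ θ, ENNReal.ofReal ((‖φ (circleMap 0 r θ)‖ + ‖ψ (circleMap 0 r θ)‖) ^ p) ∂μ
        ≤ ∫⁻ θ, (∫⁻ η, poissonDensity (circleMap 0 r θ) η * ‖H η‖ₑ ∂μ) ^ p ∂μ := by
          refine lintegral_mono fun θ => ?_
          rw [← ENNReal.ofReal_rpow_of_nonneg (by positivity) hp0.le]
          exact ENNReal.rpow_le_rpow
            (hPoisson _ (by simpa [abs_of_nonneg hr0] using hr1)) hp0.le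
      _ ≤ ∫⁻ η, ‖H η‖ₑ ^ p ∂μ :=
          lintegral_rpow_lintegral_poissonDensity_le hp hr0 hr1 hHm.enorm
      _ = ∫⁻ η, ENNReal.ofReal (H η ^ p) ∂μ := by
          refine lintegral_congr fun θ => ?_
          rw [Real.enorm_of_nonneg (hHnn θ), ENNReal.ofReal_rpow_of_nonneg (hHnn θ) hp0.le]
  · exact (((hcont hφ hr0 hr1).add (hcont hψ hr0 hr1)).rpow_const
      fun _ => Or.inr hp0.le).integrableOn_Ioc

/-- Lemma: if `φ, ψ` are analytic on the unit disk and in `H^p` for some `p > 1`, with a.e.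
radial boundary values `Fφ, Fψ`, then for every real `t`,
`∫_{-1}^{1} (|φ(x e^{it})| + |ψ(x e^{it})|)^p dx
  ≤ (1/2) ∫₀^{2π} (|Fφ(θ)| + |Fψ(θ)|)^p dθ`. -/
theorem riesz_fejer_sum_of_moduli (p : ℝ) (hp : 1 < p) (φ ψ : ℂ → ℂ) (Fφ Fψ : ℝ → ℂ)
    (hφ : AnalyticOn ℂ φ (Metric.ball 0 1)) (hψ : AnalyticOn ℂ ψ (Metric.ball 0 1))
    (hφHp : ∃ C : ℝ, ∀ r : ℝ, 0 ≤ r → r < 1 →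
      (∫ θ in (0:ℝ)..(2 * π), ‖φ ((r : ℂ) * Complex.exp (θ * Complex.I))‖ ^ p) ≤ C)
    (hψHp : ∃ C : ℝ, ∀ r : ℝ, 0 ≤ r → r < 1 →
      (∫ θ in (0:ℝ)..(2 * π), ‖ψ ((r : ℂ) * Complex.exp (θ * Complex.I))‖ ^ p) ≤ C)
    (hFφ : ∀ᵐ θ : ℝ, Tendsto (fun r : ℝ => φ ((r : ℂ) * Complex.exp (θ * Complex.I)))
      (nhdsWithin 1 (Set.Iio 1)) (nhds (Fφ θ)))
    (hFψ : ∀ᵐ θ : ℝ, Tendsto (fun r : ℝ => ψ ((r : ℂ) * Complex.exp (θ * Complex.I)))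
      (nhdsWithin 1 (Set.Iio 1)) (nhds (Fψ θ))) (t : ℝ) :
    (∫ x in (-1:ℝ)..1,
        (‖φ ((x : ℂ) * Complex.exp (t * Complex.I))‖ +
          ‖ψ ((x : ℂ) * Complex.exp (t * Complex.I))‖) ^ p) ≤
      (1 / 2) * ∫ θ in (0:ℝ)..(2 * π), (‖Fφ θ‖ + ‖Fψ θ‖) ^ p := by
  have hp0 : 0 < p := by linarith
  have hcm (r θ : ℝ) : (r : ℂ) * cexp (θ * I) = circleMap 0 r θ := by simp [circleMap]
  simp only [hcm] at *
  set B := (1 / 2) * ∫ θ in (0 : ℝ)..2 * π, (‖Fφ θ‖ + ‖Fψ θ‖) ^ p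
  have hB0 : 0 ≤ B := mul_nonneg (by norm_num)
    (intervalIntegral.integral_nonneg two_pi_pos.le fun θ _ => by positivity)
  set k : ℝ → ℝ := fun x => (‖φ (circleMap 0 x t)‖ + ‖ψ (circleMap 0 x t)‖) ^ p
  have hle : ∀ r : ℝ, 0 < r → r < 1 → ∫ x in (-r)..r, k x ≤ B := by
    intro r hr0 hr1
    have ha : ‖circleMap 0 r t‖ < 1 := by simpa [abs_of_pos hr0] using hr1
    have h1 := integral_sum_norm_rpow_le_half_circle hp0
      (diffContOnCl_comp_mul hφ.differentiableOn ha) (diffContOnCl_comp_mul hψ.differentiableOn ha)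
    have e1 (x : ℝ) : circleMap 0 r t * x = circleMap 0 (r * x) t := by
      simp [circleMap]; ring
    have e2 (θ : ℝ) : circleMap 0 r t * circleMap 0 1 θ = circleMap 0 r (θ + t) := by
      simp [circleMap, add_mul, Complex.exp_add]; ring
    simp only [e1, e2] at h1
    have hper : Function.Periodic
        (fun θ => (‖φ (circleMap 0 r θ)‖ + ‖ψ (circleMap 0 r θ)‖) ^ p) (2 * π) := fun θ => by
      simp only [periodic_circleMap 0 r θ]
    have hrot := intervalIntegral.integral_comp_add_right (a := 0) (b := 2 * π)
      (fun θ => (‖φ (circleMap 0 r θ)‖ + ‖ψ (circleMap 0 r θ)‖) ^ p) t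
    rw [zero_add, add_comm (2 * π) t, hper.intervalIntegral_add_eq t 0, zero_add] at hrot
    rw [hrot] at h1
    have hscale := intervalIntegral.mul_integral_comp_mul_left (a := -1) (b := 1) (f := k) r
    rw [mul_neg, mul_one] at hscale
    rw [← hscale]
    have h2 : ∫ x in (-1 : ℝ)..1, k (r * x) ≤ B := h1.trans (mul_le_mul_of_nonneg_left
      (integral_circleMap_rpow_le_boundary hp hφ.differentiableOn hψ.differentiableOn hφHp hψHp
        hFφ hFψ hr0.le hr1) (by norm_num))
    nlinarith
  by_cases hint : IntervalIntegrable k volume (-1) 1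
  · have hprim : ContinuousOn (fun r => ∫ x in (0 : ℝ)..r, k x) (Set.Icc (-1) 1) := by
      have := intervalIntegral.continuousOn_primitive_interval' hint
        (a := 0) (by rw [Set.uIcc_of_le] <;> norm_num)
      rwa [Set.uIcc_of_le (by norm_num)] at this
    have hsub : ∀ r ∈ Set.Icc (0 : ℝ) 1, ∫ x in (-r)..r, k x =
        (∫ x in (0 : ℝ)..r, k x) - ∫ x in (0 : ℝ)..(-r), k x := by
      intro r hr
      refine (intervalIntegral.integral_interval_sub_left ?_ ?_).symm
      all_goals
        refine hint.mono_set ?_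
        rw [Set.uIcc_of_le (by norm_num : (-1 : ℝ) ≤ 1)]
        refine Set.uIcc_subset_Icc ?_ ?_ <;> constructor <;> linarith [hr.1, hr.2]
    have hcont : ContinuousOn (fun r => (∫ x in (0 : ℝ)..r, k x) - ∫ x in (0 : ℝ)..(-r), k x)
        (Set.Icc 0 1) :=
      (hprim.mono fun r hr => ⟨by linarith [hr.1], hr.2⟩).sub
        (hprim.comp continuous_neg.continuousOn fun r hr =>
          ⟨by linarith [hr.2], by linarith [hr.1]⟩)
    rw [hsub 1 (by norm_num)]
    have htend := (hcont 1 (by norm_num)).mono_left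
      (nhdsWithin_mono 1 (Set.Ioo_subset_Icc_self (a := (0 : ℝ)) (b := 1)))
    have : (𝓝[Set.Ioo (0 : ℝ) 1] 1).NeBot := by
      rw [nhdsWithin_Ioo_eq_nhdsLT zero_lt_one]; infer_instance
    refine le_of_tendsto htend (eventually_nhdsWithin_of_forall fun r hr => ?_)
    rw [← hsub r ⟨hr.1.le, hr.2.le⟩]
    exact hle r hr.1 hr.2
  · rw [intervalIntegral.integral_undef hint]
    exact hB0
end
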